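/- arXiv:1701.05726 — 3 statements merged into one kernel-verified Lean document; each statement's English description precedes it below -/
import Mathlib

section
/- Let Ω ⊆ ℂ be a simply connected domain, f : Ω → ℂ a continuous open map, and let α : [0,1] → f(Ω) be an arc (injective path). Suppose β₁, β₂ : [0,1] → Ω are continuous maps with f ∘ β₁ = α = f ∘ β₂, β₁(0) = β₂(0), and β₁(1) = β₂(1). Then β₁ = β₂. -/
/-!
If the lifts differ at some parameter, restrict them to a maximal interval `[a, b]` on whose
interior they differ. Since `α` is injective, the two restricted lifts meet only at their common
endpoints `P ≠ Q`, so together they form a Jordan curve `J`.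

`J` bounds an open set `U` (`exists_inside`). For a path `γ` from `P` to `Q`, the variation of
`log (z - γ s)` along `γ` is a continuous logarithm `g_γ` of `(z - Q) / (z - P)` off `γ`
(`exists_log_variation`). The difference of these functions for the two halves of `J` is
`2πi` times the winding number of `J`; it is locally constant off `J`. If it were identically zero,
the two branches would glue to a logarithm of `(z - Q) / (z - P)` on `ℂ \ {P, Q}`, which is
impossible on a small circle about `Q` (`no_log_on_sphere`). Let `U` be the set where the
difference is nonzero. It vanishes outside any simply connected open set containing `J`
(`log_variation_eq`), so `U` is bounded and contained in `Ω`, and its frontier lies in `J`.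

Hence `f(U)` is a nonempty bounded open set whose frontier lies in `f(J)`, a subset of the arc `α`.
No such set exists (`frontier_not_subset_arc`): an arc has empty interior, so there is `p ∈ f(U)`
off the arc; a logarithm of `z - p` on the arc extends to the plane by Tietze's theorem, and
replacing `z - p` on `f(U)` by the exponential of that extension gives a zero-free function on the
plane that equals `z - p` on a large circle, contradicting `no_log_on_sphere` once more.
-/

open Set Metric

/-! ### Continuous logarithms -/

lemma eq_of_exp_eq {X : Type*} [TopologicalSpace X] [PreconnectedSpace X] {u v : X → ℂ}
    (hu : Continuous u) (hv : Continuous v) (h : ∀ x, Complex.exp (u x) = Complex.exp (v x))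
    (a : X) (ha : u a = v a) : u = v :=
  Complex.isCoveringMap_exp.eq_of_comp_eq hu hv
    (funext fun x => Subtype.ext (h x)) a ha

/-- Two continuous logarithms of one function differ by a locally constant function. -/
lemma isOpen_eqLocus_of_exp_eq {X : Type*} [TopologicalSpace X] {u v : X → ℂ} {O : Set X}
    (hO : IsOpen O) (hu : ContinuousOn u O) (hv : ContinuousOn v O)
    (h : ∀ x ∈ O, Complex.exp (u x) = Complex.exp (v x)) : IsOpen {x ∈ O | u x = v x} := by
  have h1 := Complex.isCoveringMap_exp.isLocalHomeomorph.isLocallyInjective.isOpen_eqLocus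
    (continuousOn_iff_continuous_domRestrict.mp hu) (continuousOn_iff_continuous_domRestrict.mp hv)
    (funext fun x => Subtype.ext (h x x.2))
  convert hO.isOpenMap_subtype_val _ h1 using 1
  ext x
  simp [and_comm]

/-- The identity of a circle has winding number one about the centre. -/
lemma no_log_on_sphere (c : ℂ) {r : ℝ} (hr : 0 < r) (H : ℂ → ℂ)
    (hH : ContinuousOn H (sphere c r)) (he : ∀ z ∈ sphere c r, Complex.exp (H z) = z - c) :
    False := by
  have hmem : ∀ t : ℝ, circleMap c r t ∈ sphere c r := circleMap_mem_sphere c hr.le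
  have hu : Continuous fun t : ℝ => H (circleMap c r t) :=
    hH.comp_continuous (continuous_circleMap c r) hmem
  have hv : Continuous fun t : ℝ => (t : ℂ) * Complex.I + H (circleMap c r 0) := by fun_prop
  have key := eq_of_exp_eq hu hv (fun t => by
    rw [he _ (hmem t), Complex.exp_add, he _ (hmem 0)]
    simp [circleMap, mul_comm]) 0 (by simp)
  have h2 := congrFun key (2 * Real.pi)
  have h3 : circleMap c r (2 * Real.pi) = circleMap c r 0 := by simp [circleMap]
  simp only [h3] at h2
  have : ((2 * Real.pi : ℝ) : ℂ) * Complex.I = 0 := by linear_combination -h2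
  simp [Real.pi_ne_zero] at this

/-- The variation of `log (z - γ s)` along a path `γ` is a continuous function of `z` off the
path. -/
lemma exists_log_variation (γ : unitInterval → ℂ) (hγ : Continuous γ) :
    ∃ g : ℂ → ℂ, ContinuousOn g (range γ)ᶜ ∧
      (∀ z ∉ range γ, Complex.exp (g z) = (z - γ 1) / (z - γ 0)) ∧
      (∀ z ∉ range γ, ∀ l : unitInterval → ℂ, Continuous l →
        (∀ s, Complex.exp (l s) = z - γ s) → g z = l 1 - l 0) := by
  classical
  have hne : ∀ z ∉ range γ, ∀ s, z - γ s ≠ 0 := fun z hz s h =>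
    hz ⟨s, (sub_eq_zero.mp h).symm⟩
  let H : C(unitInterval × ((range γ)ᶜ : Set ℂ), {z : ℂ // z ≠ 0}) :=
    ⟨fun q => ⟨((q.2 : ℂ) - γ q.1) / ((q.2 : ℂ) - γ 0),
      div_ne_zero (hne _ q.2.2 _) (hne _ q.2.2 _)⟩, by
      refine Continuous.subtype_mk ?_ _
      refine Continuous.div (by fun_prop) (by fun_prop) (fun q => hne _ q.2.2 _)⟩
  have H0 : ∀ a, H (0, a) = (fun z : ℂ ↦ (⟨_, z.exp_ne_zero⟩ : {z : ℂ // z ≠ 0}))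
      ((ContinuousMap.const ((range γ)ᶜ : Set ℂ) (0 : ℂ)) a) := fun a => by
    apply Subtype.ext
    simp [H, div_self (hne _ a.2 0)]
  let G := Complex.isCoveringMap_exp.liftHomotopy H (ContinuousMap.const _ 0) H0
  have hG : ∀ s a, Complex.exp (G (s, a)) = ((a : ℂ) - γ s) / ((a : ℂ) - γ 0) := fun s a =>
    congrArg Subtype.val
      (congrFun (Complex.isCoveringMap_exp.liftHomotopy_lifts H (ContinuousMap.const _ 0) H0) (s, a))
  have hG0 : ∀ a, G (0, a) = 0 := fun a =>
    Complex.isCoveringMap_exp.liftHomotopy_zero H (ContinuousMap.const _ 0) H0 a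
  let g : ℂ → ℂ := fun z => if hz : z ∈ (range γ)ᶜ then G (1, ⟨z, hz⟩) else 0
  have hg : ∀ a : ((range γ)ᶜ : Set ℂ), g a = G (1, a) := fun a => dif_pos a.2
  refine ⟨g, ?_, fun z hz => ?_, fun z hz l hl hle => ?_⟩
  · rw [continuousOn_iff_continuous_domRestrict]
    have : (range γ)ᶜ.domRestrict g = fun a => G (1, a) := funext hg
    rw [this]
    fun_prop
  · rw [hg ⟨z, hz⟩, hG]
  · rw [hg ⟨z, hz⟩]
    have := eq_of_exp_eq (u := fun s => G (s, ⟨z, hz⟩)) (v := fun s => l s - l 0)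
      (by fun_prop) (by fun_prop)
      (fun s => by rw [hG, Complex.exp_sub, hle, hle]) 0 (by simp [hG0])
    exact congrFun this 1

/-! ### Planar separation -/

/-- Two paths with common endpoints in a simply connected open set have the same logarithmic
variation about each point outside that set. The hypotheses on `g₁` and `g₂` are the
characterization of the variation given by `exists_log_variation`. -/
lemma log_variation_eq {S : Set ℂ} (hS : IsOpen S) (hSc : IsSimplyConnected S)
    {γ₁ γ₂ : unitInterval → ℂ} (h₁ : Continuous γ₁) (h₂ : Continuous γ₂)
    (h0 : γ₁ 0 = γ₂ 0) (h1 : γ₁ 1 = γ₂ 1) (m₁ : ∀ t, γ₁ t ∈ S) (m₂ : ∀ t, γ₂ t ∈ S)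
    {z g₁ g₂ : ℂ} (hz : z ∉ S)
    (hg₁ : ∀ l : unitInterval → ℂ, Continuous l →
      (∀ s, Complex.exp (l s) = z - γ₁ s) → g₁ = l 1 - l 0)
    (hg₂ : ∀ l : unitInterval → ℂ, Continuous l →
      (∀ s, Complex.exp (l s) = z - γ₂ s) → g₂ = l 1 - l 0) : g₁ = g₂ := by
  obtain ⟨L, hL, hLe⟩ := Complex.exists_continuousOn_eqOn_exp_comp hSc hS
    (g := fun w => z - w) (by fun_prop) (by
      rintro ⟨w, hw, h⟩
      exact hz (sub_eq_zero.mp h ▸ hw))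
  rw [hg₁ (fun s => L (γ₁ s)) (hL.comp_continuous h₁ m₁) (fun s => hLe (m₁ s)),
    hg₂ (fun s => L (γ₂ s)) (hL.comp_continuous h₂ m₂) (fun s => hLe (m₂ s)), h0, h1]

/-- A form of the separation half of the Jordan curve theorem: two paths in a simply connected open
set `S` that have the same two distinct endpoints and meet nowhere else enclose a nonempty bounded
open subset of `S`. -/
lemma exists_inside {S : Set ℂ} (hS : IsOpen S) (hSc : IsSimplyConnected S)
    {γ₁ γ₂ : unitInterval → ℂ} (h₁ : Continuous γ₁) (h₂ : Continuous γ₂)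
    (h0 : γ₁ 0 = γ₂ 0) (h1 : γ₁ 1 = γ₂ 1) (hne : γ₁ 0 ≠ γ₁ 1)
    (m₁ : ∀ t, γ₁ t ∈ S) (m₂ : ∀ t, γ₂ t ∈ S)
    (hinter : range γ₁ ∩ range γ₂ ⊆ {γ₁ 0, γ₁ 1}) :
    ∃ U : Set ℂ, IsOpen U ∧ U.Nonempty ∧ Bornology.IsBounded U ∧ U ⊆ S ∧
      frontier U ⊆ range γ₁ ∪ range γ₂ := by
  classical
  obtain ⟨g₁, c₁, e₁, v₁⟩ := exists_log_variation γ₁ h₁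
  obtain ⟨g₂, c₂, e₂, v₂⟩ := exists_log_variation γ₂ h₂
  rw [← h0, ← h1] at e₂
  have k₁ : IsClosed (range γ₁) := (isCompact_range h₁).isClosed
  have k₂ : IsClosed (range γ₂) := (isCompact_range h₂).isClosed
  set O : Set ℂ := (range γ₁)ᶜ ∩ (range γ₂)ᶜ with hOdef
  have hO : IsOpen O := k₁.isOpen_compl.inter k₂.isOpen_compl
  have d₁ : ContinuousOn g₁ O := c₁.mono inter_subset_left
  have d₂ : ContinuousOn g₂ O := c₂.mono inter_subset_right
  have hopenE : IsOpen {z ∈ O | g₁ z = g₂ z} :=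
    isOpen_eqLocus_of_exp_eq hO d₁ d₂ fun z hz => by rw [e₁ z hz.1, e₂ z hz.2]
  have hopenU : IsOpen {z ∈ O | g₁ z ≠ g₂ z} := by
    have := (d₁.sub d₂).isOpen_inter_preimage hO (isOpen_compl_singleton (x := (0 : ℂ)))
    convert this using 1
    ext z
    simp [sub_eq_zero]
  -- Outside a simply connected set carrying both paths the two variations agree.
  have hsub : ∀ T : Set ℂ, IsOpen T → IsSimplyConnected T → (∀ t, γ₁ t ∈ T) → (∀ t, γ₂ t ∈ T) →
      {z ∈ O | g₁ z ≠ g₂ z} ⊆ T := by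
    intro T hT hTc n₁ n₂ z hz
    by_contra hzT
    exact hz.2 (log_variation_eq hT hTc h₁ h₂ h0 h1 n₁ n₂ hzT (v₁ z hz.1.1) (v₂ z hz.1.2))
  refine ⟨{z ∈ O | g₁ z ≠ g₂ z}, hopenU, ?_, ?_, hsub S hS hSc m₁ m₂, ?_⟩
  · by_contra hemp
    have hEq : ∀ z ∈ O, g₁ z = g₂ z := fun z hz => by
      by_contra h
      exact hemp ⟨z, hz, h⟩
    -- The two branches glue to a logarithm of `(z - Q) / (z - P)` on `ℂ \ {P, Q}`.
    let G : ℂ → ℂ := fun z => if z ∈ range γ₁ then g₂ z else g₁ z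
    have G₁ : EqOn G g₁ (range γ₁)ᶜ := fun z hz => if_neg hz
    have G₂ : EqOn G g₂ (range γ₂)ᶜ := fun z hz => by
      by_cases h : z ∈ range γ₁
      · exact if_pos h
      · exact (if_neg h).trans (hEq z ⟨h, hz⟩)
    have hcov : ∀ z, z ≠ γ₁ 0 → z ≠ γ₁ 1 → z ∈ (range γ₁)ᶜ ∨ z ∈ (range γ₂)ᶜ := by
      intro z hz0 hz1
      by_contra! h
      simp only [mem_compl_iff, not_not] at h
      rcases hinter h with h | h
      · exact hz0 h
      · exact hz1 h
    have Gc : ∀ z, z ≠ γ₁ 0 → z ≠ γ₁ 1 → ContinuousAt G z := fun z hz0 hz1 => by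
      rcases hcov z hz0 hz1 with h | h
      · exact (c₁.congr G₁).continuousAt (k₁.isOpen_compl.mem_nhds h)
      · exact (c₂.congr G₂).continuousAt (k₂.isOpen_compl.mem_nhds h)
    have Ge : ∀ z, z ≠ γ₁ 0 → z ≠ γ₁ 1 →
        Complex.exp (G z) = (z - γ₁ 1) / (z - γ₁ 0) := fun z hz0 hz1 => by
      rcases hcov z hz0 hz1 with h | h
      · rw [G₁ h, e₁ z h]
      · rw [G₂ h, e₂ z h]
    -- Near `Q` the factor `z - P` has a logarithm, hence so would `z - Q`.
    set P := γ₁ 0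
    set Q := γ₁ 1
    have hd : 0 < dist P Q := dist_pos.mpr hne
    obtain ⟨L, hL, hLe⟩ := Complex.exists_continuousOn_eqOn_exp_comp
      (U := ball Q (dist P Q)) (g := fun w => w - P)
      (by
        have := contractibleSpace_ball (x := Q) hd
        exact SimplyConnectedSpace.ofContractible _) isOpen_ball (by fun_prop) (by
        rintro ⟨w, hw, h⟩
        rw [sub_eq_zero.mp h, mem_ball] at hw
        exact lt_irrefl _ hw)
    have hsph : ∀ z ∈ sphere Q (dist P Q / 2), z ≠ P ∧ z ≠ Q ∧ z ∈ ball Q (dist P Q) := by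
      intro z hz
      rw [mem_sphere] at hz
      refine ⟨?_, ?_, ?_⟩
      · rintro rfl
        linarith
      · rintro rfl
        rw [dist_self] at hz
        linarith
      · rw [mem_ball, hz]
        linarith
    refine no_log_on_sphere Q (half_pos hd) (fun z => G z + L z) ?_ ?_
    · refine ContinuousOn.add (fun z hz => ?_) (hL.mono fun z hz => (hsph z hz).2.2)
      exact (Gc z (hsph z hz).1 (hsph z hz).2.1).continuousWithinAt
    · intro z hz
      obtain ⟨a, b, c⟩ := hsph z hz
      have : Complex.exp (L z) = z - P := hLe c
      rw [Complex.exp_add, Ge z a b, this, div_mul_cancel₀ _ (sub_ne_zero.mpr a)]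
  · obtain ⟨R, hR⟩ := ((isCompact_range h₁).union (isCompact_range h₂)).isBounded.subset_ball 0
    have hRpos : 0 < R := by
      have := hR (Or.inl ⟨0, rfl⟩ : γ₁ 0 ∈ _)
      exact dist_nonneg.trans_lt (mem_ball.mp this)
    have := contractibleSpace_ball (x := (0 : ℂ)) hRpos
    refine isBounded_ball.subset (hsub (ball 0 R) isOpen_ball
      (SimplyConnectedSpace.ofContractible _) (fun t => hR (Or.inl ⟨t, rfl⟩))
      (fun t => hR (Or.inr ⟨t, rfl⟩)))
  · intro z hz
    by_contra hzJ
    have hzO : z ∈ O := ⟨fun h => hzJ (Or.inl h), fun h => hzJ (Or.inr h)⟩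
    rw [hopenU.frontier_eq] at hz
    have hzE : g₁ z = g₂ z := by
      by_contra h
      exact hz.2 ⟨hzO, h⟩
    obtain ⟨w, hwE, hwU⟩ := mem_closure_iff.mp hz.1 _ hopenE ⟨hzO, hzE⟩
    exact hwU.2 hwE.2

/-! ### Arcs in the plane -/

/-- An arc has empty interior: a circle does not embed in the line. -/
lemma not_isOpen_subset_arc {α : unitInterval → ℂ} (hα : Continuous α)
    (hinj : Function.Injective α) {W : Set ℂ} (hW : IsOpen W) (hne : W.Nonempty) :
    ¬ W ⊆ range α := by
  intro hsub
  obtain ⟨p, hp⟩ := hne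
  obtain ⟨r, hr, hball⟩ := nhds_basis_closedBall.mem_iff.mp (hW.mem_nhds hp)
  have hemb := (hα.isClosedEmbedding hinj).isEmbedding
  have hmem : ∀ t : ℝ, circleMap p r t ∈ range α := fun t =>
    hsub (hball (sphere_subset_closedBall (circleMap_mem_sphere p hr.le t)))
  let ψ : ℝ → unitInterval := fun t => hemb.toHomeomorph.symm ⟨circleMap p r t, hmem t⟩
  have hψ : Continuous ψ := hemb.toHomeomorph.symm.continuous.comp
    ((continuous_circleMap p r).subtype_mk _)
  have hαψ : ∀ t, α (ψ t) = circleMap p r t := fun t =>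
    congrArg Subtype.val (hemb.toHomeomorph.apply_symm_apply ⟨circleMap p r t, hmem t⟩)
  have hper : ψ (0 + Real.pi + Real.pi) = ψ 0 := hinj (by
    rw [hαψ, hαψ]
    have : (0 : ℝ) + Real.pi + Real.pi = 0 + 2 * Real.pi := by ring
    rw [this, periodic_circleMap])
  -- The difference of `ψ` at antipodal points changes sign, so it vanishes somewhere.
  let φ : ℝ → ℝ := fun t => (ψ t : ℝ) - ψ (t + Real.pi)
  have hφ : Continuous φ := by fun_prop
  have hneg : φ (0 + Real.pi) = - φ 0 := by
    simp only [φ, hper]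
    ring
  obtain ⟨t, ht⟩ : (0 : ℝ) ∈ range φ := by
    rcases le_total (φ 0) 0 with h | h
    · exact mem_range_of_exists_le_of_exists_ge hφ ⟨0, h⟩ ⟨0 + Real.pi, by rw [hneg]; linarith⟩
    · exact mem_range_of_exists_le_of_exists_ge hφ ⟨0 + Real.pi, by rw [hneg]; linarith⟩ ⟨0, h⟩
  have h2 : circleMap p r t = circleMap p r (t + Real.pi) := by
    rw [← hαψ, ← hαψ, Subtype.ext (sub_eq_zero.mp ht)]
  simp only [circleMap, Complex.ofReal_add, add_mul, Complex.exp_add, Complex.exp_pi_mul_I] at h2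
  have h3 : (r : ℂ) * Complex.exp (t * Complex.I) = 0 := by linear_combination h2 / 2
  simp [hr.ne'] at h3

/-- An arc does not separate the plane: it contains the frontier of no nonempty bounded open set. -/
lemma frontier_not_subset_arc {α : unitInterval → ℂ} (hα : Continuous α)
    (hinj : Function.Injective α) {W : Set ℂ} (hW : IsOpen W) (hne : W.Nonempty)
    (hb : Bornology.IsBounded W) : ¬ frontier W ⊆ range α := by
  classical
  intro hfr
  obtain ⟨p, hpW, hpα⟩ := not_subset.mp (not_isOpen_subset_arc hα hinj hW hne)
  have huniv : IsSimplyConnected (univ : Set ℂ) :=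
    (Homeomorph.Set.univ ℂ).toHomotopyEquiv.simplyConnectedSpace
  have hne0 : ∀ t, α t - p ≠ 0 := fun t h => hpα ⟨t, sub_eq_zero.mp h⟩
  obtain ⟨l, hle, -⟩ := Complex.isCoveringMap_exp.exists_path_lifts
    ⟨fun t => ⟨α t - p, hne0 t⟩, by fun_prop⟩ (Complex.log (α 0 - p))
    (Subtype.ext (Complex.exp_log (hne0 0)).symm)
  obtain ⟨g, hg⟩ := ContinuousMap.exists_extension (hα.isClosedEmbedding hinj) l
  have hgα : ∀ t, Complex.exp (g (α t)) = α t - p := fun t => by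
    have h1 : g (α t) = l t := congrArg (fun k : C(unitInterval, ℂ) => k t) hg
    rw [h1]
    exact congrArg Subtype.val (congrFun hle t)
  -- Inside `W`, replace `z - p` by the zero-free extension of its restriction to the arc.
  let h : ℂ → ℂ := fun z => if z ∈ W then Complex.exp (g z) else z - p
  have hh : Continuous h := by
    refine Continuous.if (fun z hz => ?_) (by fun_prop) (by fun_prop)
    obtain ⟨t, rfl⟩ := hfr hz
    exact hgα t
  obtain ⟨H, hH, hHe⟩ := Complex.exists_continuousOn_eqOn_exp_comp huniv isOpen_univ
    (g := h) hh.continuousOn (by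
      rintro ⟨z, -, hz⟩
      by_cases hzW : z ∈ W
      · simp [h, hzW] at hz
      · simp only [h, hzW, if_false] at hz
        exact hzW (sub_eq_zero.mp hz ▸ hpW))
  obtain ⟨R, hR⟩ := hb.subset_ball p
  have hRpos : 0 < R := dist_nonneg.trans_lt (mem_ball.mp (hR hpW))
  refine no_log_on_sphere p hRpos H (hH.mono (subset_univ _)) fun z hz => ?_
  have hzW : z ∉ W := fun hzW => (mem_ball.mp (hR hzW)).ne hz
  have := hHe (mem_univ z)
  simpa [h, hzW] using this

/-- **Uniqueness of lifts of arcs.** Let `Ω ⊆ ℂ` be a simply connected domain and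
`f : Ω → ℂ` a continuous open map. Two lifts of the same arc `α : [0,1] → f(Ω)` that
agree at both endpoints are equal. -/
theorem lifts_of_arcs_unique
    (Ω : Set ℂ) (hΩopen : IsOpen Ω) (hΩconn : IsConnected Ω)
    (hΩsc : SimplyConnectedSpace Ω)
    (f : ℂ → ℂ)
    (hcont : ContinuousOn f Ω)
    (hopen : ∀ V : Set ℂ, V ⊆ Ω → IsOpen V → IsOpen (f '' V))
    (α : unitInterval → ℂ) (hαcont : Continuous α)
    (hαinj : Function.Injective α) (hαmem : ∀ t, α t ∈ f '' Ω)
    (β₁ β₂ : unitInterval → ℂ)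
    (hβ₁cont : Continuous β₁) (hβ₂cont : Continuous β₂)
    (hβ₁mem : ∀ t, β₁ t ∈ Ω) (hβ₂mem : ∀ t, β₂ t ∈ Ω)
    (hβ₁lift : f ∘ β₁ = α) (hβ₂lift : f ∘ β₂ = α)
    (h0 : β₁ 0 = β₂ 0) (h1 : β₁ 1 = β₂ 1) :
    β₁ = β₂ := by
  by_contra hne
  obtain ⟨t₀, ht₀⟩ := Function.ne_iff.mp hne
  have hE : IsClosed {t | β₁ t = β₂ t} := isClosed_eq hβ₁cont hβ₂cont
  -- `(a, b)` is the maximal interval around `t₀` on which the lifts differ.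
  obtain ⟨a, ⟨haE, hat⟩, hamax⟩ := (hE.inter isClosed_Iic).isCompact.exists_isGreatest
    ⟨0, h0, (unitInterval.nonneg' : (0 : unitInterval) ≤ t₀)⟩
  obtain ⟨b, ⟨hbE, hbt⟩, hbmin⟩ := (hE.inter isClosed_Ici).isCompact.exists_isLeast
    ⟨1, h1, (unitInterval.le_one' : t₀ ≤ 1)⟩
  have hab : a < b := by
    refine lt_of_le_of_ne (le_trans hat hbt) ?_
    rintro rfl
    have : a = t₀ := le_antisymm hat hbt
    exact ht₀ (this ▸ haE)
  let σ : unitInterval → unitInterval := fun t => max a (min b t)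
  have hσ : Continuous σ := by fun_prop
  have hσ0 : σ 0 = a := by simp [σ]
  have hσ1 : σ 1 = b := by
    rw [show σ 1 = max a (min b 1) from rfl, min_eq_left unitInterval.le_one', max_eq_right hab.le]
  have hσa : ∀ t, a ≤ σ t := fun t => le_max_left _ _
  have hσb : ∀ t, σ t ≤ b := fun t => max_le hab.le (min_le_left _ _)
  have l₁ : ∀ t, f (β₁ t) = α t := congrFun hβ₁lift
  have l₂ : ∀ t, f (β₂ t) = α t := congrFun hβ₂lift
  obtain ⟨U, hUo, hUne, hUb, hUΩ, hUfr⟩ := exists_inside hΩopen hΩsc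
    (γ₁ := β₁ ∘ σ) (γ₂ := β₂ ∘ σ) (hβ₁cont.comp hσ) (hβ₂cont.comp hσ)
    (by simpa [hσ0] using haE) (by simpa [hσ1] using hbE)
    (by
      intro h
      simp only [Function.comp_apply, hσ0, hσ1] at h
      exact hab.ne (hαinj (by rw [← l₁, ← l₁, h])))
    (fun t => hβ₁mem _) (fun t => hβ₂mem _)
    (by
      rintro z ⟨⟨s, rfl⟩, ⟨t, ht⟩⟩
      simp only [Function.comp_apply] at ht
      have hst : σ t = σ s := hαinj (by rw [← l₁ (σ s), ← l₂, ht])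
      rw [hst] at ht
      simp only [Function.comp_apply, hσ0, hσ1, mem_insert_iff, mem_singleton_iff]
      rcases le_total (σ s) t₀ with h | h
      · left
        rw [le_antisymm (hamax ⟨ht.symm, h⟩) (hσa s)]
      · right
        rw [le_antisymm (hσb s) (hbmin ⟨ht.symm, h⟩)])
  have hJΩ : ∀ z ∈ frontier U, z ∈ Ω ∧ f z ∈ range α := fun z hz => by
    rcases hUfr hz with ⟨t, rfl⟩ | ⟨t, rfl⟩
    · exact ⟨hβ₁mem _, σ t, (l₁ _).symm⟩
    · exact ⟨hβ₂mem _, σ t, (l₂ _).symm⟩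
  have hcl : closure U ⊆ Ω := by
    rw [closure_eq_self_union_frontier]
    exact union_subset hUΩ fun z hz => (hJΩ z hz).1
  have hcomp : IsCompact (f '' closure U) := hUb.isCompact_closure.image_of_continuousOn
    (hcont.mono hcl)
  have hfU : IsOpen (f '' U) := hopen U hUΩ hUo
  refine frontier_not_subset_arc hαcont hαinj hfU (hUne.image f)
    (hcomp.isBounded.subset (image_mono subset_closure)) ?_
  rw [hfU.frontier_eq]
  rintro w ⟨hw, hwU⟩
  obtain ⟨z, hz, rfl⟩ := closure_minimal (image_mono subset_closure) hcomp.isClosed hw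
  refine (hJΩ z ?_).2
  rw [hUo.frontier_eq]
  exact ⟨hz, fun h => hwU ⟨z, h, rfl⟩⟩
end

section
/- Let Ω ⊆ ℂ be a domain and f : Ω → ℂ a continuous, open, and discrete mapping. Let x₀ ∈ Ω and let r > 0 be so small that U₀ := U(x₀,f,r), the connected component of f⁻¹(B(f(x₀),r)) containing x₀, is a normal neighborhood of x₀ (i.e. a normal domain containing x₀ with closure(U₀) ∩ f⁻¹({f(x₀)}) = {x₀}) contained in a simply connected open subset of Ω. Then U₀ ∩ B_f ⊆ {x₀}, where B_f is the set of points at which f fails to be a local homeomorphism. -/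
/-!
Let `x₁ ∈ U₀` with `x₁ ≠ x₀`; it suffices to show that `f` is injective near `x₁`, since `f` is
open and continuous. Suppose a small normal neighbourhood of `x₁` contains points `a ≠ b` with
`f a = f b = y`. By openness `y` may be taken off the line through `f x₀` and `f x₁`, so the
segments `[y, f x₀]` and `[y, f x₁]` meet only in `y`. The preimage of `[y, f x₀]` in `U₀` is
connected, because `x₀` is the only preimage of `f x₀`, and likewise the preimage of `[y, f x₁]`
near `x₁`. Their intersection is a discrete set containing `a` and `b`, hence disconnected, so by
Janiszewski's theorem their union separates the plane. But a union of segments issuing from `y` is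
star-shaped, and an open map admits a maximum principle: the preimage of a star-shaped set cannot
cut off a bounded piece, and such a piece would lie in the domain of `f` because `U₀` lies in a
simply connected open subset of `Ω` (`fibre_subsingleton`).

The separation theory is obtained from continuous logarithms (`no_log_on_sphere`, `log_ratio`,
`compl_preconnected`, `not_separated`). To have `log_ratio` available the segments are replaced by
thin convex open neighbourhoods; connectedness of preimages comes from `image_covers`, and the
maximum principle is `saturated_compl_preconnected`.
-/

/-- The branch set of `f` on `Ω`: the set of points of `Ω` at which `f` fails to be a
local homeomorphism. -/
def branchSet (f : ℂ → ℂ) (Ω : Set ℂ) : Set ℂ :=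
  {x ∈ Ω | ¬ ∃ U : Set ℂ, IsOpen U ∧ x ∈ U ∧ U ⊆ Ω ∧
      ∃ e : PartialHomeomorph ℂ ℂ, e.source = U ∧ Set.EqOn f (↑e) U}

section Auxiliary

open Set Metric Complex

/-! ### Continuous logarithms in the plane -/

/-- A continuous logarithm of a constant is constant on a connected set. -/
lemma log_unique {S : Set ℂ} (hS : IsPreconnected S) {h : ℂ → ℂ} (hc : ContinuousOn h S) {c : ℂ}
    (he : ∀ z ∈ S, exp (h z) = c) {x y : ℂ} (hx : x ∈ S) (hy : y ∈ S) : h x = h y := by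
  have := Subtype.preconnectedSpace hS
  have h1 : Continuous (fun z : S => h z) := continuousOn_iff_continuous_domRestrict.1 hc
  have := isCoveringMap_exp.eq_of_comp_eq (g₁ := fun z : S => h z) (g₂ := fun _ : S => h y) h1
    continuous_const (by funext z; simp [he z z.2, he y hy]) ⟨y, hy⟩ rfl
  exact congrFun this ⟨x, hx⟩

/-- `z - a` has no continuous logarithm on a circle around `a`: along the circle such a logarithm
would differ from `t * I` by a constant, contradicting `2π`-periodicity. -/
lemma no_log_on_sphere_s11 {a : ℂ} {s : ℝ} (hs : 0 < s) {h : ℂ → ℂ}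
    (hc : ContinuousOn h (sphere a s)) (he : ∀ z ∈ sphere a s, exp (h z) = z - a) : False := by
  -- The circle is parametrized by `t.re` for `t : ℂ`, so that `log_unique` applies on `ℂ`.
  have hm : ∀ t : ℂ, a + s * exp (t.re * I) ∈ sphere a s := by
    intro t
    simp [Complex.norm_exp_ofReal_mul_I, abs_of_pos hs]
  have hcont : Continuous fun t : ℂ => h (a + s * exp (t.re * I)) - t.re * I := by
    refine (hc.comp_continuous (by fun_prop) hm).sub (by fun_prop)
  have := log_unique (S := univ) isPreconnected_univ hcont.continuousOn (c := s)
    (fun t _ => by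
      rw [Complex.exp_sub, he _ (hm t)]
      field_simp [Complex.exp_ne_zero]
      ring) (mem_univ 0) (mem_univ ((2 * Real.pi : ℝ) : ℂ))
  have h2 : (2 * Real.pi : ℝ) * I = 2 * Real.pi * I := by push_cast; ring
  simp only [Complex.ofReal_re, Complex.zero_re] at this
  rw [h2, Complex.exp_two_pi_mul_I] at this
  simp only [Complex.ofReal_zero, zero_mul, Complex.exp_zero, sub_zero] at this
  exact Complex.two_pi_I_ne_zero (by linear_combination this)

/-- If `a` and `b` lie in one connected open set `G`, then `(z - a) / (z - b)` has a continuous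
logarithm off `G`. This property of `b` is locally constant on `G`: moving `b` inside a ball
contained in `G` changes the quotient by a factor `1 + w` with `‖w‖ < 1` off `G`. -/
lemma log_ratio {G : Set ℂ} (hG : IsOpen G) (hGc : IsPreconnected G) {a b : ℂ} (ha : a ∈ G)
    (hb : b ∈ G) : ∃ h : ℂ → ℂ, ContinuousOn h Gᶜ ∧ ∀ z ∈ Gᶜ, exp (h z) = (z - a) / (z - b) := by
  set T : Set ℂ := {b | b ∈ G ∧
    ∃ h : ℂ → ℂ, ContinuousOn h Gᶜ ∧ ∀ z ∈ Gᶜ, exp (h z) = (z - a) / (z - b)} with hT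
  have hne : ∀ c ∈ G, ∀ z ∈ Gᶜ, z - c ≠ 0 := by
    intro c hc z hz h0
    exact hz (by rwa [sub_eq_zero.1 h0])
  have step : ∀ c ρ, ball c ρ ⊆ G → ∀ c' ∈ ball c ρ,
      ∃ h : ℂ → ℂ, ContinuousOn h Gᶜ ∧ ∀ z ∈ Gᶜ, exp (h z) = (z - c') / (z - c) := by
    intro c ρ hρ c' hc'
    have hcG : c ∈ G := hρ (mem_ball_self (pos_of_mem_ball hc'))
    refine ⟨fun z => log ((z - c') / (z - c)), ?_, fun z hz => ?_⟩
    · refine ContinuousOn.clog ?_ fun z hz => ?_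
      · exact (by fun_prop : Continuous fun z : ℂ => z - c').continuousOn.div (by fun_prop)
          (hne c hcG)
      · have h1 : (z - c') / (z - c) = 1 + (c - c') / (z - c) := by
          have := hne c hcG z hz
          field_simp
          ring
        rw [h1]
        apply Complex.mem_slitPlane_of_norm_lt_one
        have h2 : ρ ≤ ‖z - c‖ := by
          by_contra hlt
          exact hz (hρ (by simpa [dist_eq_norm] using hlt))
        have h3 : ‖c - c'‖ < ρ := by simpa [dist_eq_norm, norm_sub_rev] using hc'
        rw [norm_div, div_lt_one (by linarith [norm_nonneg (c - c')])]
        linarith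
    · exact exp_log (div_ne_zero (hne _ (hρ hc') z hz) (hne _ hcG z hz))
  have hTo : IsOpen T := by
    rw [isOpen_iff_mem_nhds]
    rintro c ⟨hcG, h, hc, he⟩
    obtain ⟨ρ, hρ, hsub⟩ := Metric.isOpen_iff.1 hG c hcG
    filter_upwards [ball_mem_nhds c hρ] with c' hc'
    obtain ⟨h', hc1, he1⟩ := step c ρ hsub c' hc'
    refine ⟨hsub hc', fun z => h z - h' z, hc.sub hc1, fun z hz => ?_⟩
    have := hne c hcG z hz
    have := hne c' (hsub hc') z hz
    rw [Complex.exp_sub, he z hz, he1 z hz]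
    field_simp
  have hsub : G ⊆ T := by
    refine hGc.subset_of_closure_inter_subset hTo ⟨a, ha, ha, fun _ => 0, continuousOn_const,
      fun z hz => ?_⟩ ?_
    · rw [div_self (hne a ha z hz), Complex.exp_zero]
    · rintro c ⟨hcT, hcG⟩
      obtain ⟨ρ, hρ, hsub⟩ := Metric.isOpen_iff.1 hG c hcG
      obtain ⟨c', ⟨hc'G, h, hc, he⟩, hd⟩ := Metric.mem_closure_iff.1 hcT ρ hρ
      obtain ⟨h', hc1, he1⟩ := step c ρ hsub c' (by rwa [mem_ball, dist_comm])
      refine ⟨hcG, fun z => h z + h' z, hc.add hc1, fun z hz => ?_⟩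
      have := hne c hcG z hz
      have := hne c' hc'G z hz
      rw [Complex.exp_add, he z hz, he1 z hz]
      field_simp
  exact (hsub hb).2

lemma preconnected_exterior (R : ℝ) (hR : 0 ≤ R) : IsPreconnected {z : ℂ | R < ‖z‖} := by
  have : {z : ℂ | R < ‖z‖} = (fun p : ℝ × ℝ => (p.1 : ℂ) * exp (p.2 * I)) '' (Ioi R ×ˢ univ) := by
    ext z
    constructor
    · intro hz
      exact ⟨(‖z‖, arg z), ⟨hz, mem_univ _⟩, Complex.norm_mul_exp_arg_mul_I z⟩
    · rintro ⟨⟨t, θ⟩, ⟨ht, -⟩, rfl⟩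
      have ht' : R < t := ht
      simpa [Complex.norm_exp_ofReal_mul_I, abs_of_pos (hR.trans_lt ht')] using ht'
  rw [this]
  exact (isPreconnected_Ioi.prod isPreconnected_univ).image _ (by fun_prop)

lemma glue {C₁ C₂ : Set ℂ} (h₁ : IsClosed C₁) (h₂ : IsClosed C₂) {f g : ℂ → ℂ}
    (hf : ContinuousOn f C₁) (hg : ContinuousOn g C₂) (hfg : ∀ z ∈ C₁ ∩ C₂, f z = g z) :
    ∃ h : ℂ → ℂ, ContinuousOn h (C₁ ∪ C₂) ∧ EqOn h f C₁ ∧ EqOn h g C₂ := by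
  classical
  have e1 : EqOn (fun z => if z ∈ C₁ then f z else g z) f C₁ := fun z hz => by simp [hz]
  have e2 : EqOn (fun z => if z ∈ C₁ then f z else g z) g C₂ := fun z hz => by
    by_cases h : z ∈ C₁
    · simpa [h] using hfg z ⟨h, hz⟩
    · simp [h]
  exact ⟨_, (hf.congr e1).union_of_isClosed (hg.congr e2) h₁ h₂, e1, e2⟩

/-- Connectedness of the complement of a bounded open set `G` whose closure lies in a simply
connected open `V`. The hypothesis `hQ` excludes a compact piece `Q` that `G` separates from
infinity, and it only has to do so when `Q ⊆ V`. If such a piece had a point `p ∉ V`, a logarithm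
of `z - p` on `V` would allow replacing `z - p` on `Q` by a zero-free continuous function, giving
a zero-free function on `ℂ` equal to `z - p` near infinity, which is impossible. -/
lemma compl_preconnected {V G : Set ℂ} (hVo : IsOpen V) (hV : IsSimplyConnected V)
    (hGo : IsOpen G) (hGb : Bornology.IsBounded G) (hGV : closure G ⊆ V)
    (hQ : ∀ Q : Set ℂ, IsCompact Q → IsOpen (Q ∪ G) → Disjoint Q G → Q.Nonempty → Q ⊆ V → False) :
    IsPreconnected Gᶜ := by
  have key : ∀ P Q : Set ℂ, IsClosed P → IsClosed Q → Disjoint P Q → P ∪ Q = Gᶜ → Q.Nonempty →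
      (∃ R : ℝ, {z : ℂ | R < ‖z‖} ⊆ P) → False := by
    rintro P Q hP hQc hPQ hU hQn ⟨R, hR⟩
    have hQb : Q ⊆ closedBall 0 R := fun z hz => by
      by_contra h
      exact hPQ.le_bot ⟨hR (by simpa using h), hz⟩
    have hQcpt : IsCompact Q := (isCompact_closedBall 0 R).of_isClosed_subset hQc hQb
    have hQG : Disjoint Q G := disjoint_left.2 fun z hz =>
      (hU.subset (Or.inr hz) : z ∈ Gᶜ)
    have hPG : Disjoint P G := disjoint_left.2 fun z hz =>
      (hU.subset (Or.inl hz) : z ∈ Gᶜ)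
    have hall : ∀ z, z ∈ P ∨ z ∈ Q ∨ z ∈ G := fun z => by
      by_cases h : z ∈ G
      · exact Or.inr (Or.inr h)
      · rcases hU.superset h with h | h
        · exact Or.inl h
        · exact Or.inr (Or.inl h)
    have hPc : Q ∪ G = Pᶜ := by
      ext z
      have h1 := hall z
      have h2 : z ∈ P → z ∉ Q := fun h => disjoint_left.1 hPQ h
      have h3 : z ∈ P → z ∉ G := fun h => disjoint_left.1 hPG h
      simp only [mem_union, mem_compl_iff]
      tauto
    refine hQ Q hQcpt (hPc ▸ hP.isOpen_compl) hQG hQn fun p hp => ?_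
    by_contra hpV
    obtain ⟨l, hl, hle⟩ := exists_continuousOn_eqOn_exp_comp hV hVo (g := fun z => z - p)
      (by fun_prop) (by
        rintro ⟨z, hz, h0⟩
        exact hpV (by rwa [← sub_eq_zero.1 h0]))
    obtain ⟨L, hL⟩ := ContinuousMap.exists_restrict_eq (isClosed_closure (s := G))
      ⟨(closure G).domRestrict l, continuousOn_iff_continuous_domRestrict.1 (hl.mono hGV)⟩
    have hL' : ∀ z ∈ closure G, L z = l z := fun z hz => by
      have := congrArg (fun F => F ⟨z, hz⟩) hL
      simpa using this
    obtain ⟨F, hFc, hF1, hF2⟩ := glue (hP.union (isClosed_closure (s := G)))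
      (hQc.union (isClosed_closure (s := G))) (f := fun z => z - p) (g := fun z => exp (L z))
      (by fun_prop) (by fun_prop) (by
        rintro z ⟨hz1, hz2⟩
        have hz : z ∈ closure G := by
          rcases hz1 with h | h
          · rcases hz2 with h' | h'
            · exact (disjoint_left.1 hPQ h h').elim
            · exact h'
          · exact h
        rw [hL' z hz]
        exact (hle (hGV hz)).symm)
    have hFu : (P ∪ closure G) ∪ (Q ∪ closure G) = univ := by
      refine eq_univ_of_forall fun z => ?_
      rcases hall z with h | h | h
      · exact Or.inl (Or.inl h)
      · exact Or.inr (Or.inl h)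
      · exact Or.inl (Or.inr (subset_closure h))
    rw [hFu] at hFc
    have hsc : IsSimplyConnected (univ : Set ℂ) := by
      have : ContractibleSpace (univ : Set ℂ) :=
        convex_univ.contractibleSpace univ_nonempty
      exact SimplyConnectedSpace.ofContractible _
    obtain ⟨H, hHc, hHe⟩ := exists_continuousOn_eqOn_exp_comp hsc isOpen_univ hFc (by
      rintro ⟨z, -, h0⟩
      rcases hFu.superset (mem_univ z) with h | h
      · rw [hF1 h] at h0
        have hzp : z = p := sub_eq_zero.1 h0
        subst hzp
        rcases h with h | h
        · exact disjoint_left.1 hPQ h hp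
        · exact hpV (hGV h)
      · rw [hF2 h] at h0
        exact exp_ne_zero _ h0)
    have hpos : 0 < |R| + ‖p‖ + 1 := by positivity
    refine no_log_on_sphere_s11 (a := p) hpos (hHc.mono (subset_univ _)) fun z hz => ?_
    have hzR : z ∈ P := hR (by
      have h1 : ‖z - p‖ = |R| + ‖p‖ + 1 := by simpa [dist_eq_norm] using hz
      have h2 := norm_sub_le z p
      have h3 := le_abs_self R
      show R < ‖z‖
      linarith)
    have := hHe (mem_univ z)
    rw [hF1 (Or.inl hzR)] at this
    exact this
  obtain ⟨R₀, hR₀⟩ := hGb.subset_closedBall 0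
  set R := max R₀ 0
  have hext : {z : ℂ | R < ‖z‖} ⊆ Gᶜ := fun z hz hzG => by
    have h1 : ‖z‖ ≤ R₀ := by simpa using hR₀ hzG
    have h2 : R < ‖z‖ := hz
    exact absurd (h2.trans_le h1) (not_lt.2 (le_max_left _ _))
  rw [isPreconnected_iff_subset_of_fully_disjoint_closed hGo.isClosed_compl]
  intro P Q hP hQc hPQ hd
  have hPQ' : IsPreconnected {z : ℂ | R < ‖z‖} := preconnected_exterior R (le_max_right _ _)
  have aux : ∀ P Q : Set ℂ, IsClosed P → IsClosed Q → Gᶜ ⊆ P ∪ Q → Disjoint P Q →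
      {z : ℂ | R < ‖z‖} ⊆ P → Gᶜ ⊆ P := by
    intro P Q hP hQc hPQ hd hR z hz
    by_contra hzP
    refine key (P ∩ Gᶜ) (Q ∩ Gᶜ) (hP.inter hGo.isClosed_compl) (hQc.inter hGo.isClosed_compl)
      (hd.mono inter_subset_left inter_subset_left) ?_ ⟨z, (hPQ hz).resolve_left hzP, hz⟩
      ⟨R, fun w hw => ⟨hR hw, hext hw⟩⟩
    rw [← union_inter_distrib_right]
    exact inter_eq_right.2 hPQ
  rcases isPreconnected_iff_subset_of_disjoint_closed.1 hPQ' P Q hP hQc (hext.trans hPQ)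
    (by rw [hd.inter_eq, inter_empty]) with h | h
  · exact Or.inl (aux P Q hP hQc hPQ hd h)
  · exact Or.inr (aux Q P hQc hP (by rwa [union_comm]) hd.symm h)

/-- A form of Janiszewski's theorem: if `G₁`, `G₂` are connected open sets and the complement of
`G₁ ∪ G₂` is connected, then no circle off `G₁ ∩ G₂` separates two points of `G₁ ∩ G₂`. The
logarithms of `(z - a) / (z - b)` off `G₁` and off `G₂` differ by a constant off `G₁ ∪ G₂`, hence
glue to a logarithm off `G₁ ∩ G₂`, in particular on the circle. -/
lemma not_separated {G₁ G₂ : Set ℂ} (h₁ : IsOpen G₁) (h₂ : IsOpen G₂) (c₁ : IsPreconnected G₁)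
    (c₂ : IsPreconnected G₂) (hc : IsPreconnected (G₁ ∪ G₂)ᶜ) {a b : ℂ} (ha₁ : a ∈ G₁)
    (ha₂ : a ∈ G₂) (hb₁ : b ∈ G₁) (hb₂ : b ∈ G₂) {s : ℝ} (hs : 0 < s) (hsb : s < dist a b)
    (hS : ∀ z ∈ sphere a s, z ∉ G₁ ∩ G₂) : False := by
  obtain ⟨l₁, hl₁, he₁⟩ := log_ratio h₁ c₁ ha₁ hb₁
  obtain ⟨l₂, hl₂, he₂⟩ := log_ratio h₂ c₂ ha₂ hb₂
  have hk : ∃ k : ℂ, exp k = 1 ∧ ∀ z ∈ (G₁ ∪ G₂)ᶜ, l₁ z - l₂ z = k := by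
    rcases (G₁ ∪ G₂)ᶜ.eq_empty_or_nonempty with h | ⟨w, hw⟩
    · exact ⟨0, exp_zero, by simp [h]⟩
    · have hexp : ∀ z ∈ (G₁ ∪ G₂)ᶜ, exp (l₁ z - l₂ z) = 1 := by
        intro z hz
        rw [compl_union] at hz
        rw [exp_sub, he₁ z hz.1, he₂ z hz.2, div_self]
        exact div_ne_zero (sub_ne_zero.2 fun h => hz.1 (h ▸ ha₁))
          (sub_ne_zero.2 fun h => hz.1 (h ▸ hb₁))
      refine ⟨l₁ w - l₂ w, hexp w hw, fun z hz => ?_⟩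
      refine log_unique hc (h := fun z => l₁ z - l₂ z) ?_ hexp hz hw
      rw [compl_union]
      exact (hl₁.mono inter_subset_left).sub (hl₂.mono inter_subset_right)
  obtain ⟨k, hk1, hk⟩ := hk
  obtain ⟨l, hl, hl1, hl2⟩ := glue h₁.isClosed_compl h₂.isClosed_compl hl₁
    (g := fun z => l₂ z + k) (hl₂.add continuousOn_const) (by
      intro z hz
      rw [← compl_union] at hz
      linear_combination hk z hz)
  rw [← compl_inter] at hl
  have hel : ∀ z ∈ (G₁ ∩ G₂)ᶜ, exp (l z) = (z - a) / (z - b) := by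
    intro z hz
    rw [compl_inter] at hz
    rcases hz with h | h
    · rw [hl1 h, he₁ z h]
    · rw [hl2 h, exp_add, he₂ z h, hk1, mul_one]
  -- On the disc around `a`, the factor `z - b = (a - b) * (1 + (z - a) / (a - b))` has a logarithm.
  have hab : a - b ≠ 0 := by
    have := hs.trans hsb
    exact sub_ne_zero.2 (dist_pos.1 this)
  have hslit : ∀ z ∈ sphere a s, 1 + (z - a) / (a - b) ∈ slitPlane := by
    intro z hz
    apply Complex.mem_slitPlane_of_norm_lt_one
    have h1 : ‖z - a‖ = s := by simpa [dist_eq_norm] using hz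
    rw [dist_eq_norm] at hsb
    rw [norm_div, h1, div_lt_one (hs.trans hsb)]
    exact hsb
  refine no_log_on_sphere_s11 hs (h := fun z => l z + (log (1 + (z - a) / (a - b)) + log (a - b)))
    ((hl.mono hS).add (ContinuousOn.add (ContinuousOn.clog (by fun_prop) hslit)
      continuousOn_const)) fun z hz => ?_
  have h1 := slitPlane_ne_zero (hslit z hz)
  have h2 : 1 + (z - a) / (a - b) = (z - b) / (a - b) := by
    field_simp
    ring
  rw [exp_add, exp_add, hel z (hS z hz), exp_log h1, exp_log hab, h2]
  have h3 : z - b ≠ 0 := fun h => h1 (by rw [h2, h, zero_div])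
  field_simp

/-! ### Preimages under open maps -/

/-- Let `f` be proper on `R` over the connected set `N` (`hprop`). Then every nonempty relatively
clopen part `Q` of `R ∩ f ⁻¹' N` with open image maps onto `N`. -/
lemma image_covers {f : ℂ → ℂ} {R N Q Q' : Set ℂ} (hR : IsCompact (closure R))
    (hf : ContinuousOn f (closure R)) (hN : IsPreconnected N)
    (hprop : ∀ z ∈ closure R, f z ∈ N → z ∈ R) (hQ' : IsOpen Q') (hfQ : IsOpen (f '' Q))
    (hd : Disjoint Q Q') (hQQ : Q ∪ Q' = R ∩ f ⁻¹' N) (hne : Q.Nonempty) : N ⊆ f '' Q := by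
  have hQR : Q ⊆ R ∩ f ⁻¹' N := hQQ ▸ subset_union_left
  have hcl : closure Q ⊆ closure R := closure_mono fun z hz => (hQR hz).1
  refine hN.subset_of_closure_inter_subset hfQ ?_ ?_
  · obtain ⟨z, hz⟩ := hne
    exact ⟨f z, (hQR hz).2, z, hz, rfl⟩
  · rintro p ⟨hp, hpN⟩
    have hcpt : IsCompact (closure Q) := hR.of_isClosed_subset isClosed_closure hcl
    have h1 : closure (f '' Q) ⊆ f '' closure Q :=
      closure_minimal (image_mono subset_closure)
        (hcpt.image_of_continuousOn (hf.mono hcl)).isClosed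
    obtain ⟨z, hz, rfl⟩ := h1 hp
    have hzR : z ∈ Q ∪ Q' := hQQ ▸ ⟨hprop z (hcl hz) hpN, hpN⟩
    rcases hzR with h | h
    · exact ⟨z, h, rfl⟩
    · exact ((hd.symm.closure_right hQ').le_bot ⟨h, hz⟩).elim

lemma preconnected_of_split {S : Set ℂ} (hS : IsOpen S)
    (h : ∀ Q Q' : Set ℂ, IsOpen Q → IsOpen Q' → Disjoint Q Q' → Q ∪ Q' = S → Q.Nonempty →
      Q'.Nonempty → False) : IsPreconnected S := by
  rw [isPreconnected_iff_subset_of_disjoint]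
  intro u v hu hv hsub hd
  by_contra! hcon
  obtain ⟨⟨x, hx, hxu⟩, ⟨y, hy, hyv⟩⟩ := not_subset.1 hcon.1, not_subset.1 hcon.2
  refine h (S ∩ u) (S ∩ v) (hS.inter hu) (hS.inter hv) ?_ ?_ ⟨y, hy, ?_⟩ ⟨x, hx, ?_⟩
  · rw [disjoint_iff_inter_eq_empty, ← inter_inter_distrib_left, hd]
  · rw [← inter_union_distrib_left, inter_eq_left.2 hsub]
  · exact (hsub hy).resolve_right hyv
  · exact (hsub hx).resolve_left hxu

/-- The preimage of a connected open set containing a point `p` with at most one preimage is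
connected, since each clopen part of it covers `p`. -/
lemma preimage_preconnected {f : ℂ → ℂ} {R N : Set ℂ} (hR : IsCompact (closure R))
    (hf : ContinuousOn f (closure R)) (hfo : ∀ Q ⊆ R, IsOpen Q → IsOpen (f '' Q))
    (hRo : IsOpen R) (hNo : IsOpen N) (hN : IsPreconnected N)
    (hprop : ∀ z ∈ closure R, f z ∈ N → z ∈ R) {p x : ℂ} (hp : p ∈ N)
    (hx : ∀ z ∈ R, f z = p → z = x) : IsPreconnected (R ∩ f ⁻¹' N) := by
  refine preconnected_of_split ((hf.mono subset_closure).isOpen_inter_preimage hRo hNo) ?_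
  intro Q Q' hQ hQ' hd hQQ hn hn'
  have s1 : Q ⊆ R := fun z hz => (hQQ.subset (Or.inl hz)).1
  have s2 : Q' ⊆ R := fun z hz => (hQQ.subset (Or.inr hz)).1
  obtain ⟨z, hz, hzp⟩ := image_covers hR hf hN hprop hQ' (hfo Q s1 hQ) hd hQQ hn hp
  obtain ⟨w, hw, hwp⟩ := image_covers hR hf hN hprop hQ (hfo Q' s2 hQ') hd.symm
    (by rwa [union_comm]) hn' hp
  have e1 := hx z (s1 hz) hzp
  have e2 := hx w (s2 hw) hwp
  subst e1
  subst e2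
  exact hd.le_bot ⟨hz, hw⟩

/-- Points `y` off the line through `p` and `q` are dense, and for them the segments `[y, p]` and
`[y, q]` meet only in `y`. -/
lemma exists_off_line {p q : ℂ} (hpq : p ≠ q) {O : Set ℂ} (hO : IsOpen O) (hne : O.Nonempty) :
    ∃ y ∈ O, segment ℝ y p ∩ segment ℝ y q ⊆ {y} := by
  -- The cross product of `p - y` and `q - y` vanishes exactly for `y` on the line through `p, q`.
  have hD : ∃ y ∈ O, (p - y).re * (q - y).im - (p - y).im * (q - y).re ≠ 0 := by
    obtain ⟨y, hy⟩ := hne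
    by_cases h : (p - y).re * (q - y).im - (p - y).im * (q - y).re = 0
    · have hcont : Continuous fun τ : ℝ => y + τ * (I * (q - p)) := by fun_prop
      have hev : ∀ᶠ τ : ℝ in nhds 0, y + τ * (I * (q - p)) ∈ O :=
        hcont.continuousAt.eventually_mem (hO.mem_nhds (by simpa using hy))
      obtain ⟨ε, hε, hball⟩ := Metric.eventually_nhds_iff.1 hev
      refine ⟨_, hball (y := ε / 2) (by simp [abs_of_pos hε, hε]), fun h' => ?_⟩
      have hn : Complex.normSq (q - p) ≠ 0 := by
        simpa [sub_eq_zero] using hpq.symm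
      simp [Complex.normSq_apply] at h h' hn
      have h3 : ε / 2 * ((q.re - p.re) * (q.re - p.re) + (q.im - p.im) * (q.im - p.im)) = 0 := by
        linarith
      rcases mul_eq_zero.1 h3 with h4 | h4
      · linarith
      · exact hn h4
    · exact ⟨y, hy, h⟩
  obtain ⟨y, hy, hD⟩ := hD
  refine ⟨y, hy, ?_⟩
  rw [segment_eq_image', segment_eq_image']
  rintro z ⟨⟨s, -, hs⟩, ⟨t, -, ht⟩⟩
  simp only at hs ht
  have h := hs.trans ht.symm
  have hre := congrArg Complex.re h
  have him := congrArg Complex.im h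
  simp at hre him hD
  have : s * ((p.re - y.re) * (q.im - y.im) - (p.im - y.im) * (q.re - y.re)) = 0 := by
    rw [mul_sub, ← mul_assoc, ← mul_assoc, hre, him]
    ring
  have hs0 : s = 0 := (mul_eq_zero.1 this).resolve_right hD
  rw [mem_singleton_iff, ← hs, hs0, zero_smul, add_zero]

lemma exists_isolating {Ω O : Set ℂ} {f : ℂ → ℂ} (hf : ContinuousOn f Ω)
    (hdisc : ∀ y : ℂ, ∀ x ∈ Ω ∩ f ⁻¹' {y},
      ∃ V : Set ℂ, IsOpen V ∧ x ∈ V ∧ V ∩ (Ω ∩ f ⁻¹' {y}) = {x})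
    (hO : IsOpen O) (hOΩ : O ⊆ Ω) {x : ℂ} (hx : x ∈ O) :
    ∃ ρ > 0, closedBall x ρ ⊆ O ∧ (∀ z ∈ closedBall x ρ, f z = f x → z = x) ∧
      ∃ m > 0, ∀ z ∈ sphere x ρ, m ≤ dist (f z) (f x) := by
  obtain ⟨V, hV, hxV, hVe⟩ := hdisc (f x) x ⟨hOΩ hx, rfl⟩
  obtain ⟨ρ, hρ, hsub⟩ := Metric.nhds_basis_closedBall.mem_iff.1
    ((hO.inter hV).mem_nhds ⟨hx, hxV⟩)
  have hinj : ∀ z ∈ closedBall x ρ, f z = f x → z = x := fun z hz h =>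
    hVe.subset ⟨(hsub hz).2, hOΩ (hsub hz).1, h⟩
  refine ⟨ρ, hρ, fun z hz => (hsub hz).1, hinj, ?_⟩
  obtain ⟨w, hw, hmin⟩ := (isCompact_sphere x ρ).exists_isMinOn
    (NormedSpace.sphere_nonempty.2 hρ.le) (f := fun z => dist (f z) (f x))
    (continuous_dist.comp_continuousOn ((hf.mono fun z hz =>
      hOΩ (hsub (sphere_subset_closedBall hz)).1).prodMk continuousOn_const))
  refine ⟨dist (f w) (f x), dist_pos.2 fun h => ?_, fun z hz => hmin hz⟩
  have := hinj w (sphere_subset_closedBall hw) h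
  subst this
  simp at hw
  exact hρ.ne hw

/-- If `N` is open and star-shaped about `y` and `f` is proper on `U` over `closure N`, then the
preimage `U ∩ f ⁻¹' N` does not separate the plane. On a compact piece `Q` of the complement cut
off from infinity, the value of `f` outside `N` farthest from `y` could be pushed outwards along
the ray from `y` by openness of `f`, staying outside `N` and hence remaining a value on `Q`. -/
lemma saturated_compl_preconnected {Ω U V N : Set ℂ} {f : ℂ → ℂ} (hcont : ContinuousOn f Ω)
    (hopen : ∀ V : Set ℂ, V ⊆ Ω → IsOpen V → IsOpen (f '' V))
    (hVo : IsOpen V) (hV : IsSimplyConnected V) (hUV : U ⊆ V) (hVΩ : V ⊆ Ω) (hUo : IsOpen U)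
    (hUc : IsCompact (closure U)) (hUcl : closure U ⊆ Ω) (hN : IsOpen N)
    (hprop : ∀ z ∈ closure U, f z ∈ closure N → z ∈ U) {y : ℂ}
    (hstar : StarConvex ℝ y N) (hyN : y ∈ N) : IsPreconnected (U ∩ f ⁻¹' N)ᶜ := by
  have hUΩ : U ⊆ Ω := hUV.trans hVΩ
  have hGo : IsOpen (U ∩ f ⁻¹' N) := (hcont.mono hUΩ).isOpen_inter_preimage hUo hN
  have hcl : closure (U ∩ f ⁻¹' N) ⊆ U := by
    intro z hz
    have hzU : z ∈ closure U := closure_mono inter_subset_left hz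
    refine hprop z hzU ?_
    have h1 : ContinuousWithinAt f (U ∩ f ⁻¹' N) z :=
      (hcont z (hUcl hzU)).mono (inter_subset_left.trans hUΩ)
    exact h1.mem_closure hz fun w hw => hw.2
  refine compl_preconnected hVo hV hGo (hUc.isBounded.subset
    (inter_subset_left.trans subset_closure)) (hcl.trans hUV) ?_
  intro Q hQ hQo hd hne hQV
  -- Otherwise `Q` would miss `U`, which contains the closure of `U ∩ f ⁻¹' N`, and be clopen.
  obtain ⟨q₀, hq₀Q, hq₀⟩ : ∃ q ∈ Q, f q ∉ N := by
    by_contra! hall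
    have hdis : Disjoint Q U := disjoint_left.2 fun z hz hzU =>
      disjoint_left.1 hd hz ⟨hzU, hall z hz⟩
    have hQopen : IsOpen Q := by
      have : Q = (Q ∪ (U ∩ f ⁻¹' N)) ∩ (closure (U ∩ f ⁻¹' N))ᶜ := by
        ext z
        constructor
        · intro hz
          exact ⟨Or.inl hz, fun h => disjoint_left.1 hdis hz (hcl h)⟩
        · rintro ⟨h | h, h'⟩
          · exact h
          · exact (h' (subset_closure h)).elim
      rw [this]
      exact hQo.inter isClosed_closure.isOpen_compl
    rcases isClopen_iff.1 ⟨hQ.isClosed, hQopen⟩ with h | h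
    · exact hne.ne_empty h
    · exact (noncompact_univ ℂ) (h ▸ hQ)
  have hQΩ : Q ⊆ Ω := hQV.trans hVΩ
  have hK : IsCompact (f '' Q ∩ Nᶜ) :=
    (hQ.image_of_continuousOn (hcont.mono hQΩ)).inter_right hN.isClosed_compl
  obtain ⟨p, ⟨⟨q, hqQ, hqp⟩, hpN⟩, hmax⟩ := hK.exists_isMaxOn ⟨f q₀, ⟨q₀, hq₀Q, rfl⟩, hq₀⟩
    (f := fun w => dist w y) (by fun_prop)
  have hpy : p ≠ y := fun h => hpN (h ▸ hyN)
  have hO : IsOpen (f '' (Q ∪ (U ∩ f ⁻¹' N))) :=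
    hopen _ (union_subset hQΩ (inter_subset_left.trans hUΩ)) hQo
  have hcont' : Continuous fun t : ℝ => p + t • (p - y) := by fun_prop
  have hev : ∀ᶠ t : ℝ in nhds 0, p + t • (p - y) ∈ f '' (Q ∪ (U ∩ f ⁻¹' N)) :=
    hcont'.continuousAt.eventually_mem (hO.mem_nhds (by
      simpa using ⟨q, Or.inl hqQ, hqp⟩))
  obtain ⟨ε, hε, hball⟩ := Metric.eventually_nhds_iff.1 hev
  have hε2 : 0 < ε / 2 := by positivity
  obtain ⟨o, ho, hop⟩ := hball (y := ε / 2) (by simp [abs_of_pos hε, hε])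
  have hout : p + (ε / 2) • (p - y) ∉ N := by
    intro h
    apply hpN
    have h1 := hstar.add_smul_sub_mem h (t := 1 / (1 + ε / 2)) (by positivity)
      (by rw [div_le_one (by positivity)]; linarith)
    convert h1 using 1
    have h2 : p + (ε / 2) • (p - y) - y = (1 + ε / 2) • (p - y) := by
      rw [add_smul, one_smul]; ring
    rw [h2, smul_smul, one_div, inv_mul_cancel₀ (by positivity), one_smul]
    ring
  have hoQ : o ∈ Q := by
    rcases ho with h | h
    · exact h
    · exact (hout (hop ▸ h.2)).elim
  have hle : dist (p + (ε / 2) • (p - y)) y ≤ dist p y := hmax ⟨⟨o, hoQ, hop⟩, hout⟩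
  have h2 : p + (ε / 2) • (p - y) - y = (1 + ε / 2) • (p - y) := by
    rw [add_smul, one_smul]; ring
  rw [dist_eq_norm, dist_eq_norm, h2, norm_smul, Real.norm_of_nonneg (by positivity)] at hle
  have : 0 < ‖p - y‖ := norm_pos_iff.2 (sub_ne_zero.2 hpy)
  nlinarith

/-- Two points `a`, `b` of a small disc around `x₁` with the same image coincide, provided the
segments from `f a` to `f x₀` and to `f x₁` meet only in `f a`.

Let `N₁`, `N₂` be thin neighbourhoods of the two segments. Their preimages `G₁` in `U` and `G₂` in
the disc are connected; `G₃` is the rest of the preimage of `N₂` in `U`. Each clopen part of `G₃`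
covers `f a`, hence meets `G₁`, so `G₁ ∪ G₃` is connected as well. Then `not_separated` applies
to `G₁ ∪ G₃` and `G₂`, whose union is the preimage of the star-shaped set `N₁ ∪ N₂`. -/
lemma fibre_subsingleton {Ω U V : Set ℂ} {f : ℂ → ℂ} (hcont : ContinuousOn f Ω)
    (hopen : ∀ V : Set ℂ, V ⊆ Ω → IsOpen V → IsOpen (f '' V))
    (hdisc : ∀ y : ℂ, ∀ x ∈ Ω ∩ f ⁻¹' {y},
      ∃ V : Set ℂ, IsOpen V ∧ x ∈ V ∧ V ∩ (Ω ∩ f ⁻¹' {y}) = {x})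
    (hVo : IsOpen V) (hV : IsSimplyConnected V) (hUV : U ⊆ V) (hVΩ : V ⊆ Ω) (hUo : IsOpen U)
    (hUc : IsCompact (closure U)) (hUcl : closure U ⊆ Ω) {x₀ : ℂ} {r : ℝ}
    (hUB : ∀ z ∈ U, f z ∈ ball (f x₀) r)
    (hprop : ∀ z ∈ closure U, f z ∈ ball (f x₀) r → z ∈ U)
    (hx₀ : ∀ z ∈ U, f z = f x₀ → z = x₀) {x₁ : ℂ} {ρ m : ℝ} (hρ : 0 < ρ)
    (hρU : closedBall x₁ ρ ⊆ U) (hx₁ : ∀ z ∈ closedBall x₁ ρ, f z = f x₁ → z = x₁)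
    (hm : ∀ z ∈ sphere x₁ ρ, m ≤ dist (f z) (f x₁)) {a b : ℂ} (ha : a ∈ ball x₁ ρ)
    (hb : b ∈ ball x₁ ρ) (hab : f b = f a) (ham : f a ∈ ball (f x₁) m)
    (hseg : segment ℝ (f a) (f x₀) ∩ segment ℝ (f a) (f x₁) ⊆ {f a}) : a = b := by
  by_contra hne
  have hUΩ : U ⊆ Ω := hUV.trans hVΩ
  have hball : ball x₁ ρ ⊆ U := ball_subset_closedBall.trans hρU
  have hx₁U : x₁ ∈ U := hball (mem_ball_self hρ)
  have hr : 0 < r := pos_of_mem_ball (hUB x₁ hx₁U)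
  have hm0 : 0 < m := pos_of_mem_ball ham
  obtain ⟨s, hs, hsub, hsa, c, hc, hsc⟩ :=
    exists_isolating hcont hdisc isOpen_ball (hball.trans hUΩ) ha
  have hsb : s < dist a b := by
    by_contra! h
    exact hne (hsa b (by rwa [mem_closedBall, dist_comm]) hab).symm
  set y := f a with hy
  have hE₁ : segment ℝ y (f x₀) ⊆ ball (f x₀) r :=
    (convex_ball _ _).segment_subset (hUB a (hball ha)) (mem_ball_self hr)
  have hE₂ : segment ℝ y (f x₁) ⊆ ball (f x₀) r ∩ ball (f x₁) m :=
    subset_inter ((convex_ball _ _).segment_subset (hUB a (hball ha)) (hUB x₁ hx₁U))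
      ((convex_ball _ _).segment_subset ham (mem_ball_self hm0))
  have hcpt : ∀ p q : ℂ, IsCompact (segment ℝ p q) := fun p q => by
    rw [segment_eq_image']
    exact isCompact_Icc.image (by fun_prop)
  obtain ⟨δ₁, hδ₁, hδ₁s⟩ := (hcpt _ _).exists_cthickening_subset_open isOpen_ball hE₁
  obtain ⟨δ₂, hδ₂, hδ₂s⟩ := (hcpt _ _).exists_cthickening_subset_open
    (isOpen_ball.inter isOpen_ball) hE₂
  -- `δ₃` and `c / 2` force `N₁ ∩ N₂ ⊆ ball y c`, so that the circle of radius `s` around `a`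
  -- avoids the preimage of `N₁ ∩ N₂`.
  obtain ⟨δ₃, hδ₃, hδ₃s⟩ := Disjoint.exists_thickenings
    (s := segment ℝ y (f x₀) ∩ (ball y (c / 2))ᶜ) (t := segment ℝ y (f x₁))
    (disjoint_left.2 fun z hz hz' => hz.2 (by
      have : z = y := hseg ⟨hz.1, hz'⟩
      rw [this]
      exact mem_ball_self (by positivity)))
    ((hcpt _ _).inter_right isOpen_ball.isClosed_compl) (hcpt _ _).isClosed
  obtain ⟨δ, hδ, hδ1, hδ2, hδ3, hδ4⟩ : ∃ δ > 0, δ ≤ δ₁ ∧ δ ≤ δ₂ ∧ δ ≤ δ₃ ∧ δ ≤ c / 2 :=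
    ⟨min (min δ₁ δ₂) (min δ₃ (c / 2)), by positivity, by simp, by simp, by simp, by simp⟩
  set N₁ := thickening δ (segment ℝ y (f x₀)) with hN₁
  set N₂ := thickening δ (segment ℝ y (f x₁)) with hN₂
  have hN₁o : IsOpen N₁ := isOpen_thickening
  have hN₂o : IsOpen N₂ := isOpen_thickening
  have hN₁c : Convex ℝ N₁ := (convex_segment _ _).thickening δ
  have hN₂c : Convex ℝ N₂ := (convex_segment _ _).thickening δ
  have hN₁B : closure N₁ ⊆ ball (f x₀) r := (closure_thickening_subset_cthickening _ _).trans
    ((cthickening_mono hδ1 _).trans hδ₁s)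
  have hN₂B : closure N₂ ⊆ ball (f x₀) r ∩ ball (f x₁) m :=
    (closure_thickening_subset_cthickening _ _).trans ((cthickening_mono hδ2 _).trans hδ₂s)
  have hyN₁ : y ∈ N₁ := self_subset_thickening hδ _ (left_mem_segment ℝ _ _)
  have hyN₂ : y ∈ N₂ := self_subset_thickening hδ _ (left_mem_segment ℝ _ _)
  have h0N₁ : f x₀ ∈ N₁ := self_subset_thickening hδ _ (right_mem_segment ℝ _ _)
  have h1N₂ : f x₁ ∈ N₂ := self_subset_thickening hδ _ (right_mem_segment ℝ _ _)
  have hNN : ∀ z ∈ N₁ ∩ N₂, dist z y < c := by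
    rintro z ⟨hz₁, hz₂⟩
    obtain ⟨e, he, hze⟩ := mem_thickening_iff.1 hz₁
    by_cases hey : e ∈ ball y (c / 2)
    · calc dist z y ≤ dist z e + dist e y := dist_triangle _ _ _
        _ < c / 2 + c / 2 := add_lt_add (hze.trans_le hδ4) hey
        _ = c := by ring
    · exact (hδ₃s.le_bot ⟨mem_thickening_iff.2 ⟨e, ⟨he, hey⟩, hze.trans_le hδ3⟩,
        thickening_mono hδ3 _ hz₂⟩).elim
  have hsph : ∀ z ∈ sphere x₁ ρ, f z ∉ N₂ := fun z hz h =>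
    absurd (hN₂B (subset_closure h)).2 (not_lt.2 (hm z hz))
  have hpreo : ∀ R N : Set ℂ, R ⊆ U → IsOpen R → IsOpen N → IsOpen (R ∩ f ⁻¹' N) :=
    fun R N hR hRo hNo => (hcont.mono (hR.trans hUΩ)).isOpen_inter_preimage hRo hNo
  have hopenU : ∀ Q ⊆ U, IsOpen Q → IsOpen (f '' Q) := fun Q hQ => hopen Q (hQ.trans hUΩ)
  set G₁ := U ∩ f ⁻¹' N₁ with hG₁
  set G₂ := ball x₁ ρ ∩ f ⁻¹' N₂ with hG₂
  set R₃ := U \ closedBall x₁ ρ with hR₃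
  set G₃ := R₃ ∩ f ⁻¹' N₂ with hG₃
  have hR₃o : IsOpen R₃ := hUo.sdiff isClosed_closedBall
  have hG₁c : IsPreconnected G₁ := preimage_preconnected hUc (hcont.mono hUcl) hopenU hUo hN₁o
    hN₁c.isPreconnected (fun z hz h => hprop z hz (hN₁B (subset_closure h))) h0N₁ hx₀
  have hclb : closure (ball x₁ ρ) = closedBall x₁ ρ := closure_ball x₁ hρ.ne'
  have hG₂c : IsPreconnected G₂ := by
    refine preimage_preconnected (x := x₁) (p := f x₁) ?_ ?_ (fun Q hQ => hopenU Q (hQ.trans hball))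
      isOpen_ball hN₂o hN₂c.isPreconnected ?_ h1N₂ fun z hz => hx₁ z (ball_subset_closedBall hz)
    · rw [hclb]
      exact isCompact_closedBall _ _
    · rw [hclb]
      exact hcont.mono (hρU.trans hUΩ)
    · intro z hz h
      rw [hclb, ← ball_union_sphere] at hz
      exact hz.resolve_right fun h' => hsph z h' h
  have hR₃U : R₃ ⊆ U := sdiff_subset
  have hH : IsPreconnected (G₁ ∪ G₃) := by
    have aux : ∀ Q Q' : Set ℂ, IsOpen Q → IsOpen Q' → Disjoint Q Q' → Q ∪ Q' = G₁ ∪ G₃ →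
        Q'.Nonempty → G₁ ⊆ Q → False := by
      intro Q Q' hQ hQ' hd hQQ hn' hsub
      have hQ'₃ : Q' ⊆ G₃ := fun z hz =>
        (hQQ.subset (Or.inr hz)).resolve_left fun h => disjoint_left.1 hd (hsub h) hz
      have hclR : closure R₃ ⊆ closure U := closure_mono hR₃U
      obtain ⟨z, hz, hzy⟩ := image_covers (R := R₃) (N := N₂) (Q := Q') (Q' := Q ∩ G₃)
        (hUc.of_isClosed_subset isClosed_closure hclR) (hcont.mono (hclR.trans hUcl))
        hN₂c.isPreconnected (by
          intro z hz h
          refine ⟨hprop z (hclR hz) (hN₂B (subset_closure h)).1, fun hzb => ?_⟩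
          rw [← ball_union_sphere] at hzb
          rcases hzb with h' | h'
          · have hdis : Disjoint (ball x₁ ρ) R₃ :=
              disjoint_left.2 fun w hw hw' => hw'.2 (ball_subset_closedBall hw)
            exact (hdis.closure_right isOpen_ball).le_bot ⟨h', hz⟩
          · exact hsph z h' h)
        (hQ.inter (hpreo R₃ N₂ hR₃U hR₃o hN₂o))
        (hopenU Q' (fun z hz => hR₃U (hQ'₃ hz).1) hQ')
        (hd.symm.mono_right inter_subset_left) (by
          ext z
          constructor
          · rintro (h | h)
            · exact hQ'₃ h
            · exact h.2
          · intro h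
            rcases hQQ.superset (Or.inr h) with h' | h'
            · exact Or.inr ⟨h', h⟩
            · exact Or.inl h') hn' hyN₂
      refine disjoint_left.1 hd (hsub ⟨hR₃U (hQ'₃ hz).1, ?_⟩) hz
      rw [mem_preimage, hzy]
      exact hyN₁
    refine preconnected_of_split ((hpreo U N₁ subset_rfl hUo hN₁o).union
      (hpreo R₃ N₂ hR₃U hR₃o hN₂o)) ?_
    intro Q Q' hQ hQ' hd hQQ hn hn'
    rcases isPreconnected_iff_subset_of_disjoint.1 hG₁c Q Q' hQ hQ'
      (hQQ ▸ subset_union_left) (by rw [hd.inter_eq, inter_empty]) with h | h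
    · exact aux Q Q' hQ hQ' hd hQQ hn' h
    · exact aux Q' Q hQ' hQ hd.symm (by rwa [union_comm]) hn h
  have hunion : G₁ ∪ G₃ ∪ G₂ = U ∩ f ⁻¹' (N₁ ∪ N₂) := by
    ext z
    constructor
    · rintro ((h | h) | h)
      · exact ⟨h.1, Or.inl h.2⟩
      · exact ⟨h.1.1, Or.inr h.2⟩
      · exact ⟨hball h.1, Or.inr h.2⟩
    · rintro ⟨hU, h | h⟩
      · exact Or.inl (Or.inl ⟨hU, h⟩)
      · by_cases hz : z ∈ closedBall x₁ ρ
        · rw [← ball_union_sphere] at hz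
          exact Or.inr ⟨hz.resolve_right fun h' => hsph z h' h, h⟩
        · exact Or.inl (Or.inr ⟨⟨hU, hz⟩, h⟩)
  have hcompl : IsPreconnected (G₁ ∪ G₃ ∪ G₂)ᶜ := by
    rw [hunion]
    refine saturated_compl_preconnected hcont hopen hVo hV hUV hVΩ hUo hUc hUcl
      (hN₁o.union hN₂o) (fun z hz h => hprop z hz ?_)
      ((hN₁c.starConvex hyN₁).union (hN₂c.starConvex hyN₂)) (Or.inl hyN₁)
    rw [closure_union] at h
    rcases h with h | h
    · exact hN₁B h
    · exact (hN₂B h).1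
  have hbN : f b = y := hab
  refine not_separated ((hpreo U N₁ subset_rfl hUo hN₁o).union (hpreo R₃ N₂ hR₃U hR₃o hN₂o))
    (hpreo _ N₂ hball isOpen_ball hN₂o) hH hG₂c hcompl (a := a) (b := b)
    (Or.inl ⟨hball ha, hyN₁⟩) ⟨ha, hyN₂⟩ (Or.inl ⟨hball hb, ?_⟩) ⟨hb, ?_⟩ hs hsb ?_
  · rw [mem_preimage, hbN]
    exact hyN₁
  · rw [mem_preimage, hbN]
    exact hyN₂
  · rintro z hz ⟨h | h, h₂⟩
    · exact absurd (hNN (f z) ⟨h.2, h₂.2⟩) (not_lt.2 (hsc z hz))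
    · exact h.1.2 (ball_subset_closedBall h₂.1)

end Auxiliary

open Set Metric

/-- Let `f` be a continuous, open, discrete map on a planar domain `Ω`, let `x₀ ∈ Ω`
and let `r > 0` be so small that `U₀ := U(x₀,f,r)` is a normal neighbourhood of `x₀`
contained in a simply connected open subset of `Ω`. Then `U₀ ∩ B_f ⊆ {x₀}`. -/
theorem branch_set_in_normal_neighbourhood
    (Ω : Set ℂ) (hΩopen : IsOpen Ω) (hΩconn : IsConnected Ω)
    (f : ℂ → ℂ)
    (hcont : ContinuousOn f Ω)
    (hopen : ∀ V : Set ℂ, V ⊆ Ω → IsOpen V → IsOpen (f '' V))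
    (hdisc : ∀ y : ℂ, ∀ x ∈ Ω ∩ f ⁻¹' {y},
      ∃ V : Set ℂ, IsOpen V ∧ x ∈ V ∧ V ∩ (Ω ∩ f ⁻¹' {y}) = {x})
    (x₀ : ℂ) (hx₀ : x₀ ∈ Ω) (r : ℝ) (hr : 0 < r)
    (U₀ : Set ℂ)
    (hU₀def : U₀ = connectedComponentIn (Ω ∩ f ⁻¹' Metric.ball (f x₀) r) x₀)
    (hU₀cpt : IsCompact (closure U₀)) (hU₀cl : closure U₀ ⊆ Ω)
    (hU₀normal : f '' frontier U₀ = frontier (f '' U₀))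
    (hU₀nbhd : closure U₀ ∩ f ⁻¹' {f x₀} = {x₀})
    (hU₀sc : ∃ V : Set ℂ, IsOpen V ∧ SimplyConnectedSpace V ∧ U₀ ⊆ V ∧ V ⊆ Ω) :
    U₀ ∩ branchSet f Ω ⊆ {x₀} := by
  rintro x₁ ⟨hx₁U, hx₁Ω, hx₁⟩
  by_contra hne
  obtain ⟨V, hVo, hV, hUV, hVΩ⟩ := hU₀sc
  have hUΩ : U₀ ⊆ Ω := hUV.trans hVΩ
  set S := Ω ∩ f ⁻¹' Metric.ball (f x₀) r with hS
  have hSo : IsOpen S := hcont.isOpen_inter_preimage hΩopen isOpen_ball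
  have hx₀S : x₀ ∈ S := ⟨hx₀, mem_ball_self hr⟩
  have hUo : IsOpen U₀ := hU₀def ▸ hSo.connectedComponentIn
  have hUS : U₀ ⊆ S := hU₀def ▸ connectedComponentIn_subset _ _
  have hx₀U : x₀ ∈ U₀ := hU₀def ▸ mem_connectedComponentIn hx₀S
  have hUconn : IsPreconnected U₀ := hU₀def ▸ isPreconnected_connectedComponentIn
  -- `f` is proper on `U₀` over the ball, because components are relatively closed.
  have hprop : ∀ z ∈ closure U₀, f z ∈ ball (f x₀) r → z ∈ U₀ := by
    intro z hz hfz
    have h1 : IsPreconnected (insert z U₀) :=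
      hUconn.subset_closure (subset_insert _ _) (insert_subset hz subset_closure)
    have h2 : insert z U₀ ⊆ S := insert_subset ⟨hU₀cl hz, hfz⟩ hUS
    have h3 := h1.subset_connectedComponentIn (mem_insert_of_mem z hx₀U) h2
    rw [hU₀def]
    exact h3 (mem_insert _ _)
  have hx₀u : ∀ z ∈ U₀, f z = f x₀ → z = x₀ := fun z hz h =>
    hU₀nbhd.subset ⟨subset_closure hz, h⟩
  have hy : f x₀ ≠ f x₁ := fun h => hne (hx₀u x₁ hx₁U h.symm)
  obtain ⟨ρ, hρ, hρU, hx₁u, m, hm, hmS⟩ := exists_isolating hcont hdisc hUo hUΩ hx₁U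
  set W := ball x₁ ρ ∩ f ⁻¹' ball (f x₁) m with hW
  have hbU : ball x₁ ρ ⊆ U₀ := ball_subset_closedBall.trans hρU
  have hWo : IsOpen W :=
    (hcont.mono (hbU.trans hUΩ)).isOpen_inter_preimage isOpen_ball isOpen_ball
  have hWΩ : W ⊆ Ω := inter_subset_left.trans (hbU.trans hUΩ)
  have hinj : InjOn f W := by
    intro a ha b hb hab
    by_contra hne'
    -- By openness the common value `f a = f b` may be moved off the line through `f x₀`, `f x₁`,
    -- keeping two distinct preimages in `W`.
    obtain ⟨A, B, hA, hB, haA, hbB, hAB⟩ := t2_separation hne'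
    have hAo : IsOpen (f '' (A ∩ W)) := hopen _ (inter_subset_right.trans hWΩ) (hA.inter hWo)
    have hBo : IsOpen (f '' (B ∩ W)) := hopen _ (inter_subset_right.trans hWΩ) (hB.inter hWo)
    obtain ⟨y, ⟨⟨a', ha', rfl⟩, ⟨b', hb', hb'a⟩⟩, hseg⟩ := exists_off_line hy (hAo.inter hBo)
      ⟨f a, ⟨a, ⟨haA, ha⟩, rfl⟩, ⟨b, ⟨hbB, hb⟩, hab.symm⟩⟩
    have := fibre_subsingleton hcont hopen hdisc hVo hV hUV hVΩ hUo hU₀cpt hU₀cl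
      (fun z hz => (hUS hz).2) hprop hx₀u hρ hρU hx₁u hmS ha'.2.1 hb'.2.1 hb'a ha'.2.2 hseg
    exact disjoint_left.1 hAB ha'.1 (this ▸ hb'.1)
  refine hx₁ ⟨W, hWo, ⟨mem_ball_self hρ, mem_ball_self hm⟩, hWΩ,
    PartialHomeomorph.ofContinuousOpenRestrict (hinj.toPartialEquiv f W) (hcont.mono hWΩ) ?_,
    rfl, fun _ _ => rfl⟩
  intro T hT
  obtain ⟨T', hT', rfl⟩ := isOpen_induced_iff.1 hT
  have : W.domRestrict f '' (Subtype.val ⁻¹' T') = f '' (W ∩ T') := by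
    ext w
    constructor
    · rintro ⟨z, hz, rfl⟩
      exact ⟨z, ⟨z.2, hz⟩, rfl⟩
    · rintro ⟨z, hz, rfl⟩
      exact ⟨⟨z, hz.1⟩, hz.2, rfl⟩
  exact this ▸ hopen _ (inter_subset_left.trans hWΩ) (hWo.inter hT')
end

section
/- Let Ω ⊆ ℂ be a domain, f : Ω → ℂ a continuous, open, and discrete map, let z ∈ Ω, and let r > 0 be so small that U := U(z,f,r), the connected component of f⁻¹(B(f(z),r)) containing z, is a normal neighborhood of z whose branch set satisfies U ∩ B_f ⊆ {z}. Set U' := U \ {z} and B' := B(f(z),r) \ {f(z)}. Then the restriction f|_{U'} : U' → B' is a covering map. -/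
open Set Topology

/-- A connected component of a set is relatively closed in that set. -/
theorem closure_connectedComponentIn_inter_subset {X : Type*} [TopologicalSpace X] (F : Set X)
    (z : X) : closure (connectedComponentIn F z) ∩ F ⊆ connectedComponentIn F z := by
  rintro w ⟨hw, hwF⟩
  by_cases hz : z ∈ F
  · have hpre : IsPreconnected (insert w (connectedComponentIn F z)) :=
      isPreconnected_connectedComponentIn.subset_closure (subset_insert _ _)
        (insert_subset hw subset_closure)
    exact hpre.subset_connectedComponentIn (mem_insert_of_mem _ (mem_connectedComponentIn hz))
      (insert_subset hwF (connectedComponentIn_subset F z)) (mem_insert _ _)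
  · simp [connectedComponentIn_eq_empty hz] at hw

/-- A continuous, open, locally injective map is a local homeomorphism. -/
theorem isLocalHomeomorph_of_isOpenMap_of_locally_injOn {X Y : Type*} [TopologicalSpace X]
    [TopologicalSpace Y] {g : X → Y} (hc : Continuous g) (ho : IsOpenMap g)
    (hi : ∀ x, ∃ W : Set X, IsOpen W ∧ x ∈ W ∧ InjOn g W) : IsLocalHomeomorph g := by
  rw [isLocalHomeomorph_iff_isOpenEmbedding_restrict]
  intro x
  obtain ⟨W, hW, hxW, hinj⟩ := hi x
  exact ⟨W, hW.mem_nhds hxW, .of_continuous_injective_isOpenMap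
    (hc.comp continuous_subtype_val) (injOn_iff_injective.1 hinj)
    (ho.comp hW.isOpenMap_subtype_val)⟩

/-- A proper local homeomorphism out of a Hausdorff space is a covering map. -/
theorem IsProperMap.isCoveringMap_of_isLocalHomeomorph {X Y : Type*} [TopologicalSpace X]
    [TopologicalSpace Y] [T2Space X] {g : X → Y} (hp : IsProperMap g)
    (hl : IsLocalHomeomorph g) : IsCoveringMap g := by
  rw [isCoveringMap_iff_isCoveringMapOn_univ]
  refine hp.isClosedMap.isCoveringMapOn_of_isLocalHomeomorphOn (fun y _ => ?_)
    hl.isLocalHomeomorphOn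
  refine (hp.isCompact_preimage isCompact_singleton).finite
    (IsDiscrete.of_openPartialHomeomorph g subset_rfl fun e _ => ?_)
  obtain ⟨φ, hφ, h⟩ := hl e
  exact ⟨φ, hφ, h.symm⟩

/-- Let `f` be a continuous, open, discrete map on a planar domain `Ω`, `z ∈ Ω`, and
`r > 0` so small that `U := U(z,f,r)` is a normal neighbourhood of `z` with
`U ∩ B_f ⊆ {z}`. Then the restriction of `f` to `U' := U \ {z}` is a covering map
onto `B' := B(f(z),r) \ {f(z)}`. -/
theorem punctured_restriction_is_covering_map
    (Ω : Set ℂ) (hΩopen : IsOpen Ω) (hΩconn : IsConnected Ω)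
    (f : ℂ → ℂ)
    (hcont : ContinuousOn f Ω)
    (hopen : ∀ V : Set ℂ, V ⊆ Ω → IsOpen V → IsOpen (f '' V))
    (hdisc : ∀ y : ℂ, ∀ x ∈ Ω ∩ f ⁻¹' {y},
      ∃ V : Set ℂ, IsOpen V ∧ x ∈ V ∧ V ∩ (Ω ∩ f ⁻¹' {y}) = {x})
    (z : ℂ) (hz : z ∈ Ω) (r : ℝ) (hr : 0 < r)
    (U : Set ℂ)
    (hUdef : U = connectedComponentIn (Ω ∩ f ⁻¹' Metric.ball (f z) r) z)
    (hUcpt : IsCompact (closure U)) (hUcl : closure U ⊆ Ω)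
    (hUnormal : f '' frontier U = frontier (f '' U))
    (hUnbhd : closure U ∩ f ⁻¹' {f z} = {z})
    (hUbranch : U ∩ branchSet f Ω ⊆ {z})
    (hmaps : Set.MapsTo f (U \ {z}) (Metric.ball (f z) r \ {f z})) :
    IsCoveringMap (Set.MapsTo.restrict f (U \ {z}) (Metric.ball (f z) r \ {f z}) hmaps) := by
  have hball : IsOpen (Ω ∩ f ⁻¹' Metric.ball (f z) r) :=
    hcont.isOpen_inter_preimage hΩopen Metric.isOpen_ball
  have hUopen : IsOpen U := hUdef ▸ hball.connectedComponentIn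
  have hU'open : IsOpen (U \ {z}) := hUopen.sdiff isClosed_singleton
  have hUΩ : U ⊆ Ω := subset_closure.trans hUcl
  have hrel : ∀ w ∈ closure U, f w ∈ Metric.ball (f z) r → w ∈ U := by
    intro w hw hfw
    have hwΩ := hUcl hw
    subst hUdef
    exact closure_connectedComponentIn_inter_subset _ z ⟨hw, hwΩ, hfw⟩
  set g := Set.MapsTo.restrict f (U \ {z}) (Metric.ball (f z) r \ {f z}) hmaps with hg
  have hgc : Continuous g := (hcont.mono (sdiff_subset.trans hUΩ)).mapsToRestrict hmaps
  have hgo : IsOpenMap g := by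
    intro O hO
    have himg : g '' O = Subtype.val ⁻¹' (f '' (Subtype.val '' O)) := by
      ext y
      simp [g, Subtype.ext_iff]
    rw [himg]
    refine (hopen _ ?_ (hU'open.isOpenMap_subtype_val O hO)).preimage continuous_subtype_val
    rintro _ ⟨x, -, rfl⟩
    exact hUΩ x.2.1
  have hgl : IsLocalHomeomorph g := by
    refine isLocalHomeomorph_of_isOpenMap_of_locally_injOn hgc hgo fun x => ?_
    have hx : (x : ℂ) ∉ branchSet f Ω := fun h => x.2.2 (hUbranch ⟨x.2.1, h⟩)
    simp only [branchSet, mem_ofPred_eq, not_and, not_not] at hx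
    obtain ⟨V, hV, hxV, -, e, rfl, hfe⟩ := hx (hUΩ x.2.1)
    refine ⟨Subtype.val ⁻¹' e.source, hV.preimage continuous_subtype_val, hxV, ?_⟩
    intro a ha b hb hab
    exact Subtype.ext (hfe.injOn_iff.2 e.injOn ha hb (congrArg Subtype.val hab))
  have hgp : IsProperMap g := by
    have : LocallyCompactSpace ↥(Metric.ball (f z) r \ {f z}) :=
      (Metric.isOpen_ball.sdiff isClosed_singleton).locallyCompactSpace
    rw [isProperMap_iff_isCompact_preimage]
    refine ⟨hgc, fun {K} hK => ?_⟩
    have hK' : IsCompact (Subtype.val '' K) := hK.image continuous_subtype_val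
    have himg : Subtype.val '' (g ⁻¹' K) = closure U ∩ f ⁻¹' (Subtype.val '' K) := by
      ext w
      constructor
      · rintro ⟨x, hx, rfl⟩
        exact ⟨subset_closure x.2.1, g x, hx, rfl⟩
      · rintro ⟨hw, y, hy, hyw⟩
        have hwU : w ∈ U := hrel w hw (hyw ▸ y.2.1)
        have hwz : w ≠ z := fun h => y.2.2 (by rw [hyw, h]; rfl)
        refine ⟨⟨w, hwU, hwz⟩, ?_, rfl⟩
        have hgy : g ⟨w, hwU, hwz⟩ = y := Subtype.ext hyw.symm
        rwa [mem_preimage, hgy]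
    rw [Subtype.isCompact_iff, himg]
    exact hUcpt.of_isClosed_subset
      ((hcont.mono hUcl).preimage_isClosed_of_isClosed isClosed_closure hK'.isClosed)
      inter_subset_left
  exact hgp.isCoveringMap_of_isLocalHomeomorph hgl
end
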